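/- arXiv:1203.1764 — 6 statements merged into one kernel-verified Lean document; each statement's English description precedes it below -/
import Mathlib

section
/- Let q : ℤ × ℤ → (ℝ → ℝ), written q_n(j)(x), be differentiable in x, set h_n(j) := exp(q_{n+1}(j+1) − q_n(j)), and suppose q satisfies the semidiscrete Toda lattice q_{n,x}(j) − q_{n+1,x}(j) = h_n(j) − h_n(j−1) for all n ∈ ℤ and for j = −1 and j = 0. Define μ_n(x) := q_{n,x}(−1) + q_{n,x}(0) − h_n(0). Then μ_n = μ_{n+1} for all n ∈ ℤ (i.e. μ does not depend on n) if and only if the C-series cut-off constraint q_n(−1) − q_{n−1}(−2) = q_{n+1}(1) − q_n(0) holds for all n ∈ ℤ. -/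
/-!
Adding the lattice equations at two neighbouring sites `j` and `j + 1` telescopes: the charge
`qₙ,ₓ(j) + qₙ,ₓ(j+1) − hₙ(j+1)` changes by `hₙ(j−1) − h_{n+1}(j+1)` as `n` becomes `n + 1`. Hence
it is preserved exactly when these two interactions agree. Injectivity of `exp` turns this into an
equality between differences of the `q`s, which at `j = −1` is the C-series constraint at `n + 1`.
-/

namespace SemidiscreteToda

/-- The interaction `hₙ(j)` of the lattice, for the values `q` of the fields at a fixed `x`. -/
noncomputable def interaction (q : ℤ → ℤ → ℝ) (n j : ℤ) : ℝ :=
  Real.exp (q (n + 1) (j + 1) - q n j)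

theorem interaction_eq_interaction_iff {q : ℤ → ℤ → ℝ} {m n i j : ℤ} :
    interaction q m i = interaction q n j ↔
      q (m + 1) (i + 1) - q m i = q (n + 1) (j + 1) - q n j :=
  Real.exp_eq_exp

section Charge

variable {A : Type*} [AddCommGroup A]

/-- The semidiscrete Toda equation at the site `(n, j)`, at a fixed `x`. The derivatives
`qₙ,ₓ(j)` and the interactions `hₙ(j)` enter as unrelated families `v` and `h`, since telescoping
uses only the linear relation between them. -/
def EquationAt (v h : ℤ → ℤ → A) (n j : ℤ) : Prop :=
  v n j - v (n + 1) j = h n j - h n (j - 1)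

/-- The quantity attached to the neighbouring sites `j` and `j + 1` which becomes an `n`-integral
under the cut-off constraint; for `j = -1` it is the `μₙ` of the C-series. -/
def charge (v h : ℤ → ℤ → A) (j n : ℤ) : A :=
  v n j + v n (j + 1) - h n (j + 1)

variable {v h : ℤ → ℤ → A} {n j : ℤ}

theorem charge_sub_charge_succ (toda : EquationAt v h n j) (toda_succ : EquationAt v h n (j + 1)) :
    charge v h j n - charge v h j (n + 1) = h (n + 1) (j + 1) - h n (j - 1) := by
  unfold EquationAt at toda toda_succ
  rw [add_sub_cancel_right] at toda_succ
  calc charge v h j n - charge v h j (n + 1)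
      = (v n j - v (n + 1) j) + (v n (j + 1) - v (n + 1) (j + 1))
          + (h (n + 1) (j + 1) - h n (j + 1)) := by
        unfold charge; abel
    _ = (h n j - h n (j - 1)) + (h n (j + 1) - h n j)
          + (h (n + 1) (j + 1) - h n (j + 1)) := by rw [toda, toda_succ]
    _ = h (n + 1) (j + 1) - h n (j - 1) := by abel

theorem charge_eq_charge_succ_iff (toda : EquationAt v h n j)
    (toda_succ : EquationAt v h n (j + 1)) :
    charge v h j n = charge v h j (n + 1) ↔ h n (j - 1) = h (n + 1) (j + 1) := by
  rw [← sub_eq_zero, charge_sub_charge_succ toda toda_succ, sub_eq_zero, eq_comm]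

end Charge

theorem charge_interaction_eq_charge_succ_iff {q v : ℤ → ℤ → ℝ} {n j : ℤ}
    (toda : EquationAt v (interaction q) n j) (toda_succ : EquationAt v (interaction q) n (j + 1)) :
    charge v (interaction q) j n = charge v (interaction q) j (n + 1) ↔
      q (n + 1) j - q n (j - 1) = q (n + 1 + 1) (j + 1 + 1) - q (n + 1) (j + 1) := by
  rw [charge_eq_charge_succ_iff toda toda_succ, interaction_eq_interaction_iff, sub_add_cancel]

end SemidiscreteToda

open SemidiscreteToda

/-- for a solution of the semidiscrete Toda lattice (at `j = −1, 0`),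
the quantity `μₙ = qₙ,ₓ(−1) + qₙ,ₓ(0) − hₙ(0)` is independent of `n` if and only if
the C-series cut-off constraint `qₙ(−1) − q_{n−1}(−2) = q_{n+1}(1) − qₙ(0)` holds. -/
theorem c_series_constraint_iff_n_integral
    (q : ℤ → ℤ → ℝ → ℝ)
    (hq : ∀ n j, Differentiable ℝ (q n j))
    (h : ℤ → ℤ → ℝ → ℝ)
    (hh : ∀ n j x, h n j x = Real.exp (q (n + 1) (j + 1) x - q n j x))
    (toda : ∀ (n : ℤ), ∀ j ∈ ({-1, 0} : Set ℤ), ∀ x : ℝ,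
        deriv (q n j) x - deriv (q (n + 1) j) x = h n j x - h n (j - 1) x)
    (μ : ℤ → ℝ → ℝ)
    (hμ : ∀ n x, μ n x = deriv (q n (-1)) x + deriv (q n 0) x - h n 0 x) :
    (∀ (n : ℤ) (x : ℝ), μ n x = μ (n + 1) x) ↔
      (∀ (n : ℤ) (x : ℝ),
        q n (-1) x - q (n - 1) (-2) x = q (n + 1) 1 x - q n 0 x) := by
  obtain rfl : h = fun n j x ↦ interaction (q · · x) n j := by
    ext n j x
    exact hh n j x
  let v (x : ℝ) (n j : ℤ) : ℝ := deriv (q n j) x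
  have equationAt_neg_one (n : ℤ) (x : ℝ) : EquationAt (v x) (interaction (q · · x)) n (-1) :=
    toda n (-1) (by simp) x
  have equationAt_zero (n : ℤ) (x : ℝ) : EquationAt (v x) (interaction (q · · x)) n 0 :=
    toda n 0 (by simp) x
  have μ_eq (n : ℤ) (x : ℝ) : μ n x = charge (v x) (interaction (q · · x)) (-1) n := hμ n x
  have conserved_iff (n : ℤ) (x : ℝ) : μ n x = μ (n + 1) x ↔
      q (n + 1) (-1) x - q n (-2) x = q (n + 1 + 1) 1 x - q (n + 1) 0 x := by
    rw [μ_eq, μ_eq]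
    exact charge_interaction_eq_charge_succ_iff (equationAt_neg_one n x) (equationAt_zero n x)
  refine (Equiv.addRight (1 : ℤ)).forall_congr fun n ↦ forall_congr' fun x ↦ ?_
  simpa only [Equiv.coe_addRight, add_sub_cancel_right] using conserved_iff n x
end

section
/- Let q : ℤ × ℤ → (ℝ → ℝ) be differentiable in x, h_n(j) := exp(q_{n+1}(j+1) − q_n(j)), and suppose q satisfies the semidiscrete Toda lattice q_{n,x}(j) − q_{n+1,x}(j) = h_n(j) − h_n(j−1) for all n, j ∈ ℤ. Fix n, and let ψ : ℤ → (ℝ → ℝ) be differentiable and satisfy ψ_x(j) = q_{n,x}(j) ψ(j) + ψ(j+1) for all j ∈ ℤ. Then the function χ(j) := ψ(j) + h_n(j−1) ψ(j−1) satisfies χ_x(j) = q_{n+1,x}(j) χ(j) + χ(j+1) for all j ∈ ℤ. (That is, on solutions of the lattice, the discrete half of the Darboux–Laplace Lax pair ψ_{n+1}(j) = ψ_n(j) + h_n(j−1) ψ_n(j−1) is compatible with its continuous half.) -/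
/-!
The Lax equation is `ψₓ = L_a ψ`, where `L_a ψ j = a j • ψ j + ψ (j + 1)` and `a j = qₙ,ₓ(j)`. With
`M_h ψ j = ψ j + h (j - 1) • ψ (j - 1)`, compatibility amounts to the zero-curvature equation
`(M_h)ₓ = L_b M_h - M_h L_a`, where `b j = qₙ₊₁,ₓ(j)`. Its right-hand side has coefficients in front
of `ψ (j + 1)`, `ψ j` and `ψ (j - 1)`. The first is zero, the second vanishes exactly when
`a j - b j = h j - h (j - 1)`, which is the lattice equation, and the third matches that of
`(M_h)ₓ` when `hₓ(j) = b (j + 1) * h j - h j * a j`, which is what `h = exp (qₙ₊₁(j+1) - qₙ(j))`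
provides. In this order of the factors nothing has to commute.
-/

section Algebra

variable {R M : Type*} [Ring R] [AddCommGroup M] [Module R M]

/-- The right-hand side of the continuous half `ψₓ = laxOperator a ψ` of the Darboux–Laplace Lax
pair, with coefficients `a j = qₙ,ₓ(j)` at a fixed `n` and a fixed `x`. -/
def laxOperator (a : ℤ → R) (ψ : ℤ → M) (j : ℤ) : M :=
  a j • ψ j + ψ (j + 1)

/-- The Darboux–Laplace transform `ψₙ ↦ ψₙ₊₁`, which is the discrete half of the Lax pair, with
coefficients `h j = hₙ(j)` at a fixed `n` and a fixed `x`. -/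
def darbouxLaplace (h : ℤ → R) (ψ : ℤ → M) (j : ℤ) : M :=
  ψ j + h (j - 1) • ψ (j - 1)

theorem laxOperator_darbouxLaplace {a b h : ℤ → R} (toda : ∀ j, a j - b j = h j - h (j - 1))
    (ψ : ℤ → M) (j : ℤ) :
    laxOperator b (darbouxLaplace h ψ) j =
      darbouxLaplace h (laxOperator a ψ) j
        + (b j * h (j - 1) - h (j - 1) * a (j - 1)) • ψ (j - 1) := by
  have a_eq : a j = b j + h j - h (j - 1) := by
    rw [add_sub_assoc, ← toda j, add_sub_cancel]
  simp only [laxOperator, darbouxLaplace, add_sub_cancel_right, sub_add_cancel, a_eq]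
  simp only [smul_add, add_smul, sub_smul, mul_smul]
  abel

end Algebra

section Derivative

variable {𝕜 𝔸 E : Type*} [NontriviallyNormedField 𝕜] [NormedRing 𝔸] [NormedAlgebra 𝕜 𝔸]
  [NormedAddCommGroup E] [NormedSpace 𝕜 E] [Module 𝔸 E] [IsBoundedSMul 𝔸 E] [IsScalarTower 𝕜 𝔸 E]
  {h : ℤ → 𝕜 → 𝔸} {ψ : ℤ → 𝕜 → E} {x : 𝕜}

theorem hasDerivAt_darbouxLaplace {h' : ℤ → 𝔸} {ψ' : ℤ → E}
    (hh : ∀ j, HasDerivAt (h j) (h' j) x) (hψ : ∀ j, HasDerivAt (ψ j) (ψ' j) x) (j : ℤ) :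
    HasDerivAt (fun y ↦ darbouxLaplace (h · y) (ψ · y) j)
      (darbouxLaplace (h · x) ψ' j + h' (j - 1) • ψ (j - 1) x) x := by
  simpa only [darbouxLaplace, add_assoc] using
    (hψ j).fun_add ((hh (j - 1)).fun_smul (hψ (j - 1)))

theorem semidiscrete_lax_pair_compatibility_general {a b : ℤ → 𝔸}
    (hh : ∀ j, HasDerivAt (h j) (b (j + 1) * h j x - h j x * a j) x)
    (toda : ∀ j, a j - b j = h j x - h (j - 1) x)
    (hψ : ∀ j, HasDerivAt (ψ j) (laxOperator a (ψ · x) j) x) (j : ℤ) :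
    HasDerivAt (fun y ↦ darbouxLaplace (h · y) (ψ · y) j)
      (laxOperator b (darbouxLaplace (h · x) (ψ · x)) j) x := by
  rw [laxOperator_darbouxLaplace toda]
  simpa only [sub_add_cancel] using hasDerivAt_darbouxLaplace hh hψ j

end Derivative

theorem hasDerivAt_exp_sub {u v : ℝ → ℝ} {u' v' x : ℝ} (hv : HasDerivAt v v' x)
    (hu : HasDerivAt u u' x) :
    HasDerivAt (fun y ↦ Real.exp (v y - u y))
      (v' * Real.exp (v x - u x) - Real.exp (v x - u x) * u') x :=
  (hv.fun_sub hu).exp.congr_deriv (by ring)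

/-- on solutions of the semidiscrete Toda lattice, the discrete half of
the Darboux–Laplace Lax pair `ψ_{n+1}(j) = ψₙ(j) + hₙ(j−1) ψₙ(j−1)` is compatible
with the continuous half `ψₓ(j) = qₙ,ₓ(j) ψ(j) + ψ(j+1)`. -/
theorem semidiscrete_lax_pair_compatibility
    (q : ℤ → ℤ → ℝ → ℝ)
    (hq : ∀ n j, Differentiable ℝ (q n j))
    (h : ℤ → ℤ → ℝ → ℝ)
    (hh : ∀ n j x, h n j x = Real.exp (q (n + 1) (j + 1) x - q n j x))
    (toda : ∀ (n j : ℤ) (x : ℝ),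
        deriv (q n j) x - deriv (q (n + 1) j) x = h n j x - h n (j - 1) x)
    (n : ℤ)
    (ψ : ℤ → ℝ → ℝ)
    (hψd : ∀ j, Differentiable ℝ (ψ j))
    (hψ : ∀ (j : ℤ) (x : ℝ),
        deriv (ψ j) x = deriv (q n j) x * ψ j x + ψ (j + 1) x)
    (χ : ℤ → ℝ → ℝ)
    (hχ : ∀ (j : ℤ) (x : ℝ), χ j x = ψ j x + h n (j - 1) x * ψ (j - 1) x) :
    ∀ (j : ℤ) (x : ℝ),
      deriv (χ j) x = deriv (q (n + 1) j) x * χ j x + χ (j + 1) x := by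
  obtain rfl : χ = fun k y ↦ darbouxLaplace (h n · y) (ψ · y) k := funext₂ hχ
  obtain rfl : h = fun m k y ↦ Real.exp (q (m + 1) (k + 1) y - q m k y) := funext₃ hh
  exact fun j x ↦ (semidiscrete_lax_pair_compatibility_general
    (a := fun k ↦ deriv (q n k) x) (b := fun k ↦ deriv (q (n + 1) k) x)
    (fun k ↦ hasDerivAt_exp_sub (hq (n + 1) (k + 1) x).hasDerivAt (hq n k x).hasDerivAt)
    (toda n · x) (fun k ↦ (hψd k x).hasDerivAt.congr_deriv (hψ k x)) j).deriv
end

section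
/- Let q : ℤ → (ℝ² → ℝ) be C³ functions satisfying the two-dimensional Toda lattice q_{xy}(j) = h(j) − h(j−1), where h(j) := exp(q(j+1) − q(j)) and b(j) := q_x(j). Fix an integer k ≥ 2, and let B^{k−1}, B^{k}, B^{k+1} : ℤ → (ℝ² → ℝ) be C¹ functions satisfying: ∂_y B^{k}(j) = h(j) B^{k−1}(j+1) − h(j+k−1) B^{k−1}(j); ∂_y B^{k+1}(j) = h(j) B^{k}(j+1) − h(j+k) B^{k}(j); and ∂_x B^{k−1}(j) = B^{k−1}(j)(b(j+k−1) − b(j)) + B^{k}(j) − B^{k}(j−1), for all j. Then for all j ∈ ℤ: ∂_y[ B^{k}(j)(b(j+k) − b(j)) + B^{k+1}(j) − B^{k+1}(j−1) ] = ∂_x[ h(j) B^{k−1}(j+1) − h(j+k−1) B^{k−1}(j) ]. Hence the two defining equations for the nonlocal variable b^{(k)}(j) are compatible, the compatibility being provided by the first equation at level k+1. -/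
/-- Partial derivative in the first (x) variable. -/
noncomputable def pdx (f : ℝ × ℝ → ℝ) : ℝ × ℝ → ℝ :=
  fun p => deriv (fun t => f (t, p.2)) p.1

/-- Partial derivative in the second (y) variable. -/
noncomputable def pdy (f : ℝ × ℝ → ℝ) : ℝ × ℝ → ℝ :=
  fun p => deriv (fun t => f (p.1, t)) p.2

/-!
In the variables `(b, h)` the lattice reads `b_y(j) = h(j) - h(j-1)`,
`h_x(j) = h(j) (b(j+1) - b(j))`. Put `β = b(j+k) - b(j)`. Each of the two cross derivatives of
`b^{(k)}(j)` equals
`h(j) (b^{(k-1)}(j+1) β + b^{(k)}(j+1) - b^{(k)}(j))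
  - h(j+k-1) (b^{(k-1)}(j) β + b^{(k)}(j) - b^{(k)}(j-1))`:
in the `x`-derivative the factors `b(j+1) - b(j)` coming from `h_x` and `b(j+k) - b(j+1)` coming
from `b^{(k-1)}_x` add up to `β` (likewise in the second term), and in the `y`-derivative the
contributions `± h(j+k) b^{(k)}(j)` and `± h(j-1) b^{(k)}(j)` of `b^{(k+1)}_y` and `b_y` cancel.
-/

section PartialDerivatives

variable {f : ℝ × ℝ → ℝ} {p : ℝ × ℝ}

theorem hasDerivAt_pdx (hf : DifferentiableAt ℝ f p) :
    HasDerivAt (fun t => f (t, p.2)) (pdx f p) p.1 :=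
  DifferentiableAt.hasDerivAt (by fun_prop)

theorem hasDerivAt_pdy (hf : DifferentiableAt ℝ f p) :
    HasDerivAt (fun t => f (p.1, t)) (pdy f p) p.2 :=
  DifferentiableAt.hasDerivAt (by fun_prop)

theorem pdx_eq_fderiv_apply (hf : DifferentiableAt ℝ f p) : pdx f p = fderiv ℝ f p (1, 0) :=
  (hf.hasFDerivAt.comp_hasDerivAt p.1
    ((hasDerivAt_id p.1).prodMk (hasDerivAt_const p.1 p.2))).deriv

theorem contDiff_pdx {n : WithTop ℕ∞} (hf : ContDiff ℝ (n + 1) f) : ContDiff ℝ n (pdx f) := by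
  have hpdx : pdx f = fun p => fderiv ℝ f p (1, 0) :=
    funext fun p => pdx_eq_fderiv_apply (hf.differentiable (by simp) p)
  rw [hpdx]
  exact (hf.fderiv_right le_rfl).clm_apply contDiff_const

theorem pdx_exp_sub {g : ℝ × ℝ → ℝ} (hf : DifferentiableAt ℝ f p)
    (hg : DifferentiableAt ℝ g p) :
    pdx (fun s => Real.exp (f s - g s)) p = Real.exp (f p - g p) * (pdx f p - pdx g p) :=
  ((hasDerivAt_pdx hf).sub (hasDerivAt_pdx hg)).exp.deriv

end PartialDerivatives

section NonlocalVariables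

variable {h b Bkm Bk Bkp : ℤ → ℝ × ℝ → ℝ} {k : ℤ} {p : ℝ × ℝ}

theorem pdy_nonlocal_x_equation
    (hb : ∀ i, DifferentiableAt ℝ (b i) p)
    (hBk : ∀ i, DifferentiableAt ℝ (Bk i) p)
    (hBkp : ∀ i, DifferentiableAt ℝ (Bkp i) p)
    (b_y : ∀ i, pdy (b i) p = h i p - h (i - 1) p)
    (Bk_y : ∀ i, pdy (Bk i) p = h i p * Bkm (i + 1) p - h (i + k - 1) p * Bkm i p)
    (Bkp_y : ∀ i, pdy (Bkp i) p = h i p * Bk (i + 1) p - h (i + k) p * Bk i p) (j : ℤ) :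
    pdy (fun s => Bk j s * (b (j + k) s - b j s) + Bkp j s - Bkp (j - 1) s) p
      = h j p * (Bkm (j + 1) p * (b (j + k) p - b j p) + Bk (j + 1) p - Bk j p)
        - h (j + k - 1) p * (Bkm j p * (b (j + k) p - b j p) + Bk j p - Bk (j - 1) p) :=
  calc
    _ = pdy (Bk j) p * (b (j + k) p - b j p) + Bk j p * (pdy (b (j + k)) p - pdy (b j) p)
          + pdy (Bkp j) p - pdy (Bkp (j - 1)) p :=
      ((((hasDerivAt_pdy (hBk j)).mul
        ((hasDerivAt_pdy (hb (j + k))).sub (hasDerivAt_pdy (hb j)))).add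
          (hasDerivAt_pdy (hBkp j))).sub (hasDerivAt_pdy (hBkp (j - 1)))).deriv
    _ = _ := by
      rw [b_y, b_y, Bk_y, Bkp_y, Bkp_y, sub_add_cancel, sub_add_eq_add_sub]
      ring

theorem pdx_nonlocal_y_equation
    (hh : ∀ i, DifferentiableAt ℝ (h i) p)
    (hBkm : ∀ i, DifferentiableAt ℝ (Bkm i) p)
    (h_x : ∀ i, pdx (h i) p = h i p * (b (i + 1) p - b i p))
    (Bkm_x : ∀ i,
      pdx (Bkm i) p = Bkm i p * (b (i + k - 1) p - b i p) + Bk i p - Bk (i - 1) p) (j : ℤ) :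
    pdx (fun s => h j s * Bkm (j + 1) s - h (j + k - 1) s * Bkm j s) p
      = h j p * (Bkm (j + 1) p * (b (j + k) p - b j p) + Bk (j + 1) p - Bk j p)
        - h (j + k - 1) p * (Bkm j p * (b (j + k) p - b j p) + Bk j p - Bk (j - 1) p) :=
  calc
    _ = pdx (h j) p * Bkm (j + 1) p + h j p * pdx (Bkm (j + 1)) p
          - (pdx (h (j + k - 1)) p * Bkm j p + h (j + k - 1) p * pdx (Bkm j) p) :=
      (((hasDerivAt_pdx (hh j)).mul (hasDerivAt_pdx (hBkm (j + 1)))).sub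
        ((hasDerivAt_pdx (hh (j + k - 1))).mul (hasDerivAt_pdx (hBkm j)))).deriv
    _ = _ := by
      rw [h_x, h_x, Bkm_x, Bkm_x, sub_add_cancel, add_right_comm j 1 k, add_sub_cancel_right,
        add_sub_cancel_right]
      ring

end NonlocalVariables

theorem toda_nonlocal_variables_compatibility_general
    (q h b : ℤ → ℝ × ℝ → ℝ)
    (hq : ∀ j, ContDiff ℝ 2 (q j))
    (hh : ∀ j p, h j p = Real.exp (q (j + 1) p - q j p))
    (hb : ∀ j, b j = pdx (q j))
    (toda : ∀ (j : ℤ) (p : ℝ × ℝ), pdy (pdx (q j)) p = h j p - h (j - 1) p)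
    (k : ℤ)
    (Bkm Bk Bkp : ℤ → ℝ × ℝ → ℝ)
    (hBkm : ∀ j, Differentiable ℝ (Bkm j))
    (hBk : ∀ j, Differentiable ℝ (Bk j))
    (hBkp : ∀ j, Differentiable ℝ (Bkp j))
    (e1 : ∀ (j : ℤ) (p : ℝ × ℝ),
        pdy (Bk j) p = h j p * Bkm (j + 1) p - h (j + k - 1) p * Bkm j p)
    (e2 : ∀ (j : ℤ) (p : ℝ × ℝ),
        pdy (Bkp j) p = h j p * Bk (j + 1) p - h (j + k) p * Bk j p)
    (e3 : ∀ (j : ℤ) (p : ℝ × ℝ),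
        pdx (Bkm j) p = Bkm j p * (b (j + k - 1) p - b j p) + Bk j p - Bk (j - 1) p) :
    ∀ (j : ℤ) (p : ℝ × ℝ),
      pdy (fun s => Bk j s * (b (j + k) s - b j s) + Bkp j s - Bkp (j - 1) s) p
        = pdx (fun s => h j s * Bkm (j + 1) s - h (j + k - 1) s * Bkm j s) p := by
  intro j p
  have q_diff (i : ℤ) : Differentiable ℝ (q i) := (hq i).differentiable two_ne_zero
  have b_diff (i : ℤ) : Differentiable ℝ (b i) := by
    rw [hb]
    exact (contDiff_pdx (n := 1) (hq i)).differentiable one_ne_zero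
  have h_eq (i : ℤ) : h i = fun s => Real.exp (q (i + 1) s - q i s) := funext (hh i)
  have h_diff (i : ℤ) : Differentiable ℝ (h i) := by
    rw [h_eq]
    exact ((q_diff (i + 1)).sub (q_diff i)).exp
  have b_y (i : ℤ) : pdy (b i) p = h i p - h (i - 1) p := by rw [hb, toda]
  have h_x (i : ℤ) : pdx (h i) p = h i p * (b (i + 1) p - b i p) := by
    rw [h_eq, pdx_exp_sub (q_diff (i + 1) p) (q_diff i p), hb, hb]
  rw [pdy_nonlocal_x_equation (b_diff · p) (hBk · p) (hBkp · p) b_y (e1 · p) (e2 · p),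
    pdx_nonlocal_y_equation (h_diff · p) (hBkm · p) h_x (e3 · p)]

/-- compatibility of the two defining equations of the nonlocal
variable `b^{(k)}(j)` in Shabat's scheme for the 2D Toda lattice, provided by the
first equation at level `k+1`. Here `Bkm, Bk, Bkp` play the roles of
`b^{(k−1)}, b^{(k)}, b^{(k+1)}`. -/
theorem toda_nonlocal_variables_compatibility
    (q h b : ℤ → ℝ × ℝ → ℝ)
    (hq : ∀ j, ContDiff ℝ 3 (q j))
    (hh : ∀ j p, h j p = Real.exp (q (j + 1) p - q j p))
    (hb : ∀ j, b j = pdx (q j))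
    (toda : ∀ (j : ℤ) (p : ℝ × ℝ), pdy (pdx (q j)) p = h j p - h (j - 1) p)
    (k : ℤ) (hk : 2 ≤ k)
    (Bkm Bk Bkp : ℤ → ℝ × ℝ → ℝ)
    (hBkm : ∀ j, ContDiff ℝ 1 (Bkm j))
    (hBk : ∀ j, ContDiff ℝ 1 (Bk j))
    (hBkp : ∀ j, ContDiff ℝ 1 (Bkp j))
    (e1 : ∀ (j : ℤ) (p : ℝ × ℝ),
        pdy (Bk j) p = h j p * Bkm (j + 1) p - h (j + k - 1) p * Bkm j p)
    (e2 : ∀ (j : ℤ) (p : ℝ × ℝ),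
        pdy (Bkp j) p = h j p * Bk (j + 1) p - h (j + k) p * Bk j p)
    (e3 : ∀ (j : ℤ) (p : ℝ × ℝ),
        pdx (Bkm j) p = Bkm j p * (b (j + k - 1) p - b j p) + Bk j p - Bk (j - 1) p) :
    ∀ (j : ℤ) (p : ℝ × ℝ),
      pdy (fun s => Bk j s * (b (j + k) s - b j s) + Bkp j s - Bkp (j - 1) s) p
        = pdx (fun s => h j s * Bkm (j + 1) s - h (j + k - 1) s * Bkm j s) p :=
  toda_nonlocal_variables_compatibility_general q h b (fun j => (hq j).of_le (by norm_num)) hh hb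
    toda k Bkm Bk Bkp (fun j => (hBkm j).differentiable one_ne_zero)
    (fun j => (hBk j).differentiable one_ne_zero)
    (fun j => (hBkp j).differentiable one_ne_zero) e1 e2 e3
end

section
/- Let q : ℤ × ℤ → (ℝ → ℝ), differentiable in x, satisfy the semidiscrete Toda lattice b_n(j) − b_{n+1}(j) = h_n(j) − h_n(j−1), where b_n(j) := q_{n,x}(j) and h_n(j) := exp(q_{n+1}(j+1) − q_n(j)). Let B¹, B² : ℤ × ℤ → (ℝ → ℝ) be differentiable in x and satisfy, for all n, j: ∂_x b_n(j) = B¹_n(j) − B¹_n(j−1); B¹_n(j) − B¹_{n+1}(j) = ∂_x h_n(j); ∂_x B¹_n(j) = B¹_n(j)( b_{n+1}(j+1) − b_n(j) ) + h_n(j)( B¹_n(j−1) − B¹_n(j) ) + B²_n(j) − B²_n(j−1); and B²_n(j) − B²_{n+1}(j) = h_n(j) B¹_{n+1}(j+1) − h_{n+1}(j+1) B¹_{n+1}(j). Define F_n(j) := b_n(j)² + B¹_n(j) + B¹_n(j−1). Then for all n, j: ∂_x F_n(j) − ∂_x F_{n+1}(j) = h_n(j)( F_{n+1}(j+1) − F_n(j)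 ) − h_n(j−1)( F_{n+1}(j) − F_n(j−1) ). (This identity expresses that the flow q_{n,t}(j) = b_n(j)² + b_n^{(1)}(j) + b_n^{(1)}(j−1) defines a symmetry of the semidiscrete Toda lattice.) -/
/-!
Along the second-order flow `q_{n,t}(j) = Fₙ(j)` the variable `h` obeys a local conservation law
`∂ₜ hₙ(j) = hₙ(j) (F_{n+1}(j+1) − Fₙ(j)) = ∂ₓ Pₙ(j)` with flux
`Pₙ(j) = hₙ(j) (b_{n+1}(j+1) + bₙ(j) − hₙ(j))`. The nonlocal variables drop out
of `Fₙ(j) − F_{n+1}(j)`, which the lattice equation turns into the telescoping form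
`Pₙ(j) − Pₙ(j−1)`. Differentiating this in `x` gives the linearized lattice equation.
-/

namespace SemidiscreteToda

variable {𝕜 A : Type*}

/-- The right-hand side `Fₙ(j) = bₙ(j)² + bₙ⁽¹⁾(j) + bₙ⁽¹⁾(j−1)` of the second-order flow; the
nonlocal variable `b⁽¹⁾` is the argument `B`. -/
def secondFlow [CommRing A] (b B : ℤ → ℤ → 𝕜 → A) (n j : ℤ) (x : 𝕜) : A :=
  b n j x ^ 2 + B n j x + B n (j - 1) x

/-- The flux `Pₙ(j)` in the conservation law `∂ₜ hₙ(j) = ∂ₓ Pₙ(j)` that the second-order flow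
induces on `h`. -/
def secondFlux [CommRing A] (h b : ℤ → ℤ → 𝕜 → A) (n j : ℤ) (x : 𝕜) : A :=
  h n j x * (b (n + 1) (j + 1) x + b n j x - h n j x)

theorem secondFlow_sub_eq_secondFlux_sub [CommRing A] {h b B : ℤ → ℤ → 𝕜 → A} {n j : ℤ} {x : 𝕜}
    (toda : b n j x - b (n + 1) j x = h n j x - h n (j - 1) x)
    (hB : ∀ j, B n j x - B (n + 1) j x = h n j x * (b (n + 1) (j + 1) x - b n j x)) :
    secondFlow b B n j x - secondFlow b B (n + 1) j x =
      secondFlux h b n j x - secondFlux h b n (j - 1) x := by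
  have hB_pred := hB (j - 1)
  rw [sub_add_cancel] at hB_pred
  simp only [secondFlow, secondFlux, sub_add_cancel]
  linear_combination hB j + hB_pred +
    (b n j x + b (n + 1) j x - h n j x - h n (j - 1) x) * toda

variable [NontriviallyNormedField 𝕜] [NormedCommRing A] [NormedAlgebra 𝕜 A]

theorem hasDerivAt_secondFlux {h b B : ℤ → ℤ → 𝕜 → A} {n j : ℤ} {x : 𝕜}
    (hh : HasDerivAt (h n j) (h n j x * (b (n + 1) (j + 1) x - b n j x)) x)
    (hb : ∀ n j, HasDerivAt (b n j) (B n j x - B n (j - 1) x) x)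
    (hB : B n j x - B (n + 1) j x = h n j x * (b (n + 1) (j + 1) x - b n j x)) :
    HasDerivAt (secondFlux h b n j)
      (h n j x * (secondFlow b B (n + 1) (j + 1) x - secondFlow b B n j x)) x := by
  refine (hh.mul (((hb (n + 1) (j + 1)).add (hb n j)).sub hh)).congr_deriv ?_
  simp only [secondFlow, Pi.add_apply, Pi.sub_apply, add_sub_cancel_right]
  linear_combination 2 * h n j x * hB

theorem differentiable_secondFlow {b B : ℤ → ℤ → 𝕜 → A}
    (hb : ∀ n j, Differentiable 𝕜 (b n j)) (hB : ∀ n j, Differentiable 𝕜 (B n j)) (n j : ℤ) :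
    Differentiable 𝕜 (secondFlow b B n j) :=
  (((hb n j).pow 2).add (hB n j)).add (hB n (j - 1))

theorem hasDerivAt_exp_sub {f g : ℝ → ℝ} {x : ℝ}
    (hf : DifferentiableAt ℝ f x) (hg : DifferentiableAt ℝ g x) :
    HasDerivAt (fun y ↦ Real.exp (f y - g y))
      (Real.exp (f x - g x) * (deriv f x - deriv g x)) x :=
  (hf.hasDerivAt.sub hg.hasDerivAt).exp

end SemidiscreteToda

open SemidiscreteToda

theorem semidiscrete_toda_second_order_symmetry_general {𝕜 A : Type*}
    [NontriviallyNormedField 𝕜] [NormedCommRing A] [NormedAlgebra 𝕜 A]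
    {h b B : ℤ → ℤ → 𝕜 → A}
    (hh : ∀ n j x, HasDerivAt (h n j) (h n j x * (b (n + 1) (j + 1) x - b n j x)) x)
    (toda : ∀ n j x, b n j x - b (n + 1) j x = h n j x - h n (j - 1) x)
    (hb : ∀ n j x, HasDerivAt (b n j) (B n j x - B n (j - 1) x) x)
    (hB : ∀ n j x, B n j x - B (n + 1) j x = h n j x * (b (n + 1) (j + 1) x - b n j x))
    (n j : ℤ) (x : 𝕜) :
    HasDerivAt (secondFlow b B n j - secondFlow b B (n + 1) j)
      (h n j x * (secondFlow b B (n + 1) (j + 1) x - secondFlow b B n j x) -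
        h n (j - 1) x * (secondFlow b B (n + 1) j x - secondFlow b B n (j - 1) x)) x := by
  have telescoping : secondFlow b B n j - secondFlow b B (n + 1) j =
      secondFlux h b n j - secondFlux h b n (j - 1) :=
    funext fun y ↦ secondFlow_sub_eq_secondFlux_sub (toda n j y) fun j ↦ hB n j y
  have flux_deriv (j : ℤ) := hasDerivAt_secondFlux (hh n j x) (fun n j ↦ hb n j x) (hB n j x)
  have flux_deriv_pred := flux_deriv (j - 1)
  rw [sub_add_cancel] at flux_deriv_pred
  rw [telescoping]
  exact (flux_deriv j).sub flux_deriv_pred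

/-- the flow `q_{n,t}(j) = bₙ(j)² + bₙ⁽¹⁾(j) + bₙ⁽¹⁾(j−1)` defines a
symmetry of the semidiscrete Toda lattice:
`∂ₓFₙ(j) − ∂ₓF_{n+1}(j) = hₙ(j)(F_{n+1}(j+1) − Fₙ(j)) − hₙ(j−1)(F_{n+1}(j) − Fₙ(j−1))`.
Here `B1, B2` play the roles of the nonlocal variables `b⁽¹⁾, b⁽²⁾`. -/
theorem semidiscrete_toda_second_order_symmetry
    (q h b : ℤ → ℤ → ℝ → ℝ)
    (hq : ∀ n j, Differentiable ℝ (q n j))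
    (hh : ∀ n j x, h n j x = Real.exp (q (n + 1) (j + 1) x - q n j x))
    (hb : ∀ n j x, b n j x = deriv (q n j) x)
    (toda : ∀ (n j : ℤ) (x : ℝ),
        b n j x - b (n + 1) j x = h n j x - h n (j - 1) x)
    (B1 B2 : ℤ → ℤ → ℝ → ℝ)
    (hB1 : ∀ n j, Differentiable ℝ (B1 n j))
    (hB2 : ∀ n j, Differentiable ℝ (B2 n j))
    (e1 : ∀ (n j : ℤ) (x : ℝ), HasDerivAt (b n j) (B1 n j x - B1 n (j - 1) x) x)
    (e2 : ∀ (n j : ℤ) (x : ℝ), B1 n j x - B1 (n + 1) j x = deriv (h n j) x)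
    (e3 : ∀ (n j : ℤ) (x : ℝ),
        deriv (B1 n j) x
          = B1 n j x * (b (n + 1) (j + 1) x - b n j x)
            + h n j x * (B1 n (j - 1) x - B1 n j x)
            + B2 n j x - B2 n (j - 1) x)
    (e4 : ∀ (n j : ℤ) (x : ℝ),
        B2 n j x - B2 (n + 1) j x
          = h n j x * B1 (n + 1) (j + 1) x - h (n + 1) (j + 1) x * B1 (n + 1) j x)
    (F : ℤ → ℤ → ℝ → ℝ)
    (hF : ∀ n j x, F n j x = (b n j x) ^ 2 + B1 n j x + B1 n (j - 1) x) :
    ∀ (n j : ℤ) (x : ℝ),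
      deriv (F n j) x - deriv (F (n + 1) j) x
        = h n j x * (F (n + 1) (j + 1) x - F n j x)
          - h n (j - 1) x * (F (n + 1) j x - F n (j - 1) x) := by
  obtain rfl : F = secondFlow b B1 := funext fun n ↦ funext fun j ↦ funext (hF n j)
  have h_deriv (n j : ℤ) (x : ℝ) :
      HasDerivAt (h n j) (h n j x * (b (n + 1) (j + 1) x - b n j x)) x := by
    rw [funext (hh n j), hb, hb]
    exact hasDerivAt_exp_sub (hq (n + 1) (j + 1) x) (hq n j x)
  have B1_sub (n j : ℤ) (x : ℝ) := (e2 n j x).trans (h_deriv n j x).deriv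
  have F_diff := differentiable_secondFlow (fun n j x ↦ (e1 n j x).differentiableAt) hB1
  intro n j x
  exact ((F_diff n j x).hasDerivAt.sub (F_diff (n + 1) j x).hasDerivAt).unique
    (semidiscrete_toda_second_order_symmetry_general h_deriv toda e1 B1_sub n j x)
end

section
/- Let q : ℤ × ℤ → (ℝ → ℝ), differentiable in x, satisfy the semidiscrete Toda lattice b_n(j) − b_{n+1}(j) = h_n(j) − h_n(j−1) (at least for j = −1 and all n), where b_n(j) := q_{n,x}(j) and h_n(j) := exp(q_{n+1}(j+1) − q_n(j)). Let B¹, B² satisfy, for all n and the relevant j: ∂_x b_n(j) = B¹_n(j) − B¹_n(j−1); B¹_n(j) − B¹_{n+1}(j) = ∂_x h_n(j); and B²_n(j) − B²_{n+1}(j) = h_n(j) B¹_{n+1}(j+1) − h_{n+1}(j+1) B¹_{n+1}(j). Define u_n := exp(−q_n(−2)), v_n := exp(q_{n+1}(−1)), r_n := B¹_n(−2), and s_n := B²_n(−2) + r_n( b_n(−1) − h_n(−1) ). Then for all n: r_n − r_{n+1} = ∂_x( u_n v_n ) and s_n − s_{n+1} = ∂_x( v_{n,x} u_n − (1/2)(u_n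 v_n)² ). (The difference derivatives of the boundary nonlocalities r_n and s_n are total x-derivatives.) -/
/-! Since `uₙvₙ = hₙ(−2)` and `vₙ,ₓ = b_{n+1}(−1)vₙ`, the two fluxes are `hₙ(−2)` and
`b_{n+1}(−1)hₙ(−2) − ½hₙ(−2)²`. The first identity is the equation defining `b⁽¹⁾` at the boundary.
For the second, the Toda equation at the boundary replaces `bₙ(−1) − hₙ(−1)` by
`b_{n+1}(−1) − hₙ(−2)` in `sₙ`, after which the difference `sₙ − s_{n+1}` is what the product rule
gives for the derivative of the flux. -/

namespace SemidiscreteToda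

section BoundaryNonlocality

variable {R : Type*} [CommRing R]

/-- The boundary nonlocality `sₙ`, for a boundary at an arbitrary site `j` (the paper has `j = −2`).
The arguments are the lattice fields `bₙ(j)`, `hₙ(j)`, `bₙ⁽¹⁾(j)`, `bₙ⁽²⁾(j)` at a fixed `x`. -/
def boundaryNonlocality (b h B₁ B₂ : ℤ → ℤ → R) (j n : ℤ) : R :=
  B₂ n j + B₁ n j * (b n (j + 1) - h n (j + 1))

theorem boundaryNonlocality_sub_succ {b h B₁ B₂ : ℤ → ℤ → R} {j n : ℤ}
    (toda : b n (j + 1) - b (n + 1) (j + 1) = h n (j + 1) - h n j)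
    (hB₂ : B₂ n j - B₂ (n + 1) j
      = h n j * B₁ (n + 1) (j + 1) - h (n + 1) (j + 1) * B₁ (n + 1) j) :
    boundaryNonlocality b h B₁ B₂ j n - boundaryNonlocality b h B₁ B₂ j (n + 1)
      = (B₁ (n + 1) (j + 1) - B₁ (n + 1) j) * h n j
        + (b (n + 1) (j + 1) - h n j) * (B₁ n j - B₁ (n + 1) j) := by
  have shift : b n (j + 1) - h n (j + 1) = b (n + 1) (j + 1) - h n j := by
    linear_combination toda
  rw [boundaryNonlocality, boundaryNonlocality, shift]
  linear_combination hB₂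

end BoundaryNonlocality

theorem exp_neg_mul_exp (a c : ℝ) : Real.exp (-a) * Real.exp c = Real.exp (c - a) := by
  rw [← Real.exp_add, neg_add_eq_sub]

theorem hasDerivAt_mul_sub_half_sq {𝕜 : Type*} [NontriviallyNormedField 𝕜] [NeZero (2 : 𝕜)]
    {f g : 𝕜 → 𝕜} {f' g' x : 𝕜} (hf : HasDerivAt f f' x) (hg : HasDerivAt g g' x) :
    HasDerivAt (fun t => f t * g t - 1 / 2 * g t ^ 2) (f' * g x + (f x - g x) * g') x := by
  refine ((hf.mul hg).sub ((hg.pow 2).const_mul (1 / 2))).congr_deriv ?_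
  field_simp
  ring

end SemidiscreteToda

open SemidiscreteToda

/-- the difference derivatives of the boundary nonlocalities
`rₙ = bₙ⁽¹⁾(−2)` and `sₙ = bₙ⁽²⁾(−2) + rₙ(bₙ(−1) − hₙ(−1))` are total x-derivatives:
`rₙ − r_{n+1} = ∂ₓ(uₙvₙ)` and `sₙ − s_{n+1} = ∂ₓ(vₙ,ₓ uₙ − ½(uₙvₙ)²)`, where
`uₙ = exp(−qₙ(−2))`, `vₙ = exp(q_{n+1}(−1))`. Here `B1, B2` play the roles of
`b⁽¹⁾, b⁽²⁾`. -/
theorem semidiscrete_boundary_nonlocalities_left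
    (q h b : ℤ → ℤ → ℝ → ℝ)
    (hq : ∀ n j, Differentiable ℝ (q n j))
    (hh : ∀ n j x, h n j x = Real.exp (q (n + 1) (j + 1) x - q n j x))
    (hb : ∀ n j x, b n j x = deriv (q n j) x)
    (toda : ∀ (n : ℤ) (x : ℝ),
        b n (-1) x - b (n + 1) (-1) x = h n (-1) x - h n (-2) x)
    (B1 B2 : ℤ → ℤ → ℝ → ℝ)
    (e1 : ∀ (n j : ℤ) (x : ℝ), HasDerivAt (b n j) (B1 n j x - B1 n (j - 1) x) x)
    (e2 : ∀ (n j : ℤ) (x : ℝ), B1 n j x - B1 (n + 1) j x = deriv (h n j) x)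
    (e3 : ∀ (n j : ℤ) (x : ℝ),
        B2 n j x - B2 (n + 1) j x
          = h n j x * B1 (n + 1) (j + 1) x - h (n + 1) (j + 1) x * B1 (n + 1) j x)
    (u v r s : ℤ → ℝ → ℝ)
    (hu : ∀ n x, u n x = Real.exp (-(q n (-2) x)))
    (hv : ∀ n x, v n x = Real.exp (q (n + 1) (-1) x))
    (hr : ∀ n x, r n x = B1 n (-2) x)
    (hs : ∀ n x, s n x = B2 n (-2) x + r n x * (b n (-1) x - h n (-1) x)) :
    ∀ (n : ℤ) (x : ℝ),
      (r n x - r (n + 1) x = deriv (fun t => u n t * v n t) x)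
      ∧ (s n x - s (n + 1) x
          = deriv (fun t => deriv (v n) t * u n t - (1 / 2) * (u n t * v n t) ^ 2) x) := by
  intro n x
  have uv_eq : ∀ t, u n t * v n t = h n (-2) t := fun t => by
    rw [hu, hv, hh, exp_neg_mul_exp]; rfl
  have deriv_v : ∀ t, deriv (v n) t = v n t * b (n + 1) (-1) t := fun t => by
    rw [funext (hv n), deriv_exp (hq (n + 1) (-1) t), hb]
  have flux_eq : ∀ t, deriv (v n) t * u n t - 1 / 2 * (u n t * v n t) ^ 2
      = b (n + 1) (-1) t * h n (-2) t - 1 / 2 * h n (-2) t ^ 2 := fun t => by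
    rw [deriv_v, ← uv_eq]; ring
  have h_differentiable : Differentiable ℝ (h n (-2)) := by
    rw [funext (hh n (-2))]
    exact ((hq _ _).sub (hq _ _)).exp
  have hasDerivAt_h : HasDerivAt (h n (-2)) (B1 n (-2) x - B1 (n + 1) (-2) x) x := by
    rw [e2]
    exact (h_differentiable x).hasDerivAt
  have s_eq : ∀ m, s m x
      = boundaryNonlocality (b · · x) (h · · x) (B1 · · x) (B2 · · x) (-2) m := fun m => by
    rw [hs, hr]; rfl
  constructor
  · rw [funext uv_eq, hasDerivAt_h.deriv, hr, hr]
  · rw [funext flux_eq, (hasDerivAt_mul_sub_half_sq (e1 (n + 1) (-1) x) hasDerivAt_h).deriv,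
      s_eq, s_eq]
    exact boundaryNonlocality_sub_succ (toda n x) (e3 n (-2) x)
end

section
/- Let q : ℤ × ℤ → (ℝ → ℝ), differentiable in x, satisfy the semidiscrete Toda lattice b_n(j) − b_{n+1}(j) = h_n(j) − h_n(j−1) (at least for j = 1 and all n), where b_n(j) := q_{n,x}(j) and h_n(j) := exp(q_{n+1}(j+1) − q_n(j)). Let B¹, B² satisfy, for all n and the relevant j: ∂_x b_n(j) = B¹_n(j) − B¹_n(j−1); B¹_n(j) − B¹_{n+1}(j) = ∂_x h_n(j); and B²_n(j) − B²_{n+1}(j) = h_n(j) B¹_{n+1}(j+1) − h_{n+1}(j+1) B¹_{n+1}(j). Define w_n := exp(−q_n(0)), z_n := exp(q_{n+1}(1)), ρ_n := B¹_n(0), and σ_n := B²_n(0) + ρ_n( b_n(1) − h_n(1) ). Then for all n: ρ_n − ρ_{n+1} = ∂_x( w_n z_n ) and σ_n − σ_{n+1} = ∂_x( z_{n,x} w_n − (1/2)(w_n z_n)² ). (The difference derivatives of the boundary nonlocalities ρ_n and σ_n are total x-derivatives.) -/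
/-!
Beyond differentiability, the exponentials enter only through `w n * z n = h n j` and the linear
equation `∂ₓ (z n) = z n * b (n + 1) (j + 1)`. Together they turn the second flux into
`∂ₓ (z n) * w n - (w n * z n) ^ 2 / 2 = b (n + 1) (j + 1) * h n j - (h n j) ^ 2 / 2`. In its
derivative, `∂ₓ b` and `∂ₓ h` are differences of `B1`. The Toda equation eliminates `b n (j + 1)`
from `σ n - σ (n + 1)`, after which the terms in `h n (j + 1)` and `h (n + 1) (j + 1)` cancel and
the same expression remains.
-/

/- At the boundary site `j` of the lattice: `b n = bₙ(j+1)`, `h₁ n = hₙ(j+1)`, `β n = bₙ⁽²⁾(j)`,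
while `h₀ = hₙ(j)` and `c = b⁽¹⁾ₙ₊₁(j+1)` for the one `n` under consideration. -/
theorem boundary_nonlocality_sub_succ {R : Type*} [CommRing R] {ρ σ β b h₁ : ℤ → R} {h₀ c : R}
    {n : ℤ} (toda : b n - b (n + 1) = h₁ n - h₀)
    (hβ : β n - β (n + 1) = h₀ * c - h₁ (n + 1) * ρ (n + 1))
    (hσ : ∀ m, σ m = β m + ρ m * (b m - h₁ m)) :
    σ n - σ (n + 1) = (c - ρ (n + 1)) * h₀ + (b (n + 1) - h₀) * (ρ n - ρ (n + 1)) := by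
  rw [hσ, hσ]
  linear_combination hβ + ρ n * toda

section NormedAlgebra

variable {𝕜 A : Type*} [NontriviallyNormedField 𝕜] [NeZero (2 : 𝕜)] [NormedCommRing A]
  [NormedAlgebra 𝕜 A]

theorem hasDerivAt_mul_sub_half_smul_sq {f g : 𝕜 → A} {f' g' : A} {x : 𝕜}
    (hf : HasDerivAt f f' x) (hg : HasDerivAt g g' x) :
    HasDerivAt (fun t => f t * g t - (1 / 2 : 𝕜) • g t ^ 2) (f' * g x + (f x - g x) * g') x := by
  have half_deriv_sq : (1 / 2 : 𝕜) • (2 * g x * g') = g x * g' := by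
    rw [mul_assoc, two_mul, ← two_smul 𝕜, smul_smul, one_div_mul_cancel two_ne_zero, one_smul]
  refine ((hf.fun_mul hg).fun_sub ((hg.fun_pow 2).fun_const_smul (1 / 2 : 𝕜))).congr_deriv ?_
  rw [Nat.cast_ofNat, pow_one, half_deriv_sq]
  ring

theorem semidiscrete_boundary_nonlocalities_right_general
    {h b B1 B2 : ℤ → ℤ → 𝕜 → A} {w z ρ σ : ℤ → 𝕜 → A} (j : ℤ)
    (hw : ∀ n, Differentiable 𝕜 (w n))
    (hz : ∀ n x, HasDerivAt (z n) (z n x * b (n + 1) (j + 1) x) x)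
    (hwz : ∀ n x, w n x * z n x = h n j x)
    (toda : ∀ n x, b n (j + 1) x - b (n + 1) (j + 1) x = h n (j + 1) x - h n j x)
    (e1 : ∀ n x, HasDerivAt (b n (j + 1)) (B1 n (j + 1) x - B1 n j x) x)
    (e2 : ∀ n x, B1 n j x - B1 (n + 1) j x = deriv (h n j) x)
    (e3 : ∀ n x, B2 n j x - B2 (n + 1) j x
      = h n j x * B1 (n + 1) (j + 1) x - h (n + 1) (j + 1) x * B1 (n + 1) j x)
    (hρ : ∀ n x, ρ n x = B1 n j x)
    (hσ : ∀ n x, σ n x = B2 n j x + ρ n x * (b n (j + 1) x - h n (j + 1) x))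
    (n : ℤ) (x : 𝕜) :
    HasDerivAt (fun t => w n t * z n t) (ρ n x - ρ (n + 1) x) x ∧
      HasDerivAt (fun t => deriv (z n) t * w n t - (1 / 2 : 𝕜) • (w n t * z n t) ^ 2)
        (σ n x - σ (n + 1) x) x := by
  have wz_eq : (fun t => w n t * z n t) = h n j := funext (hwz n)
  have hasDerivAt_h : HasDerivAt (h n j) (ρ n x - ρ (n + 1) x) x := by
    have h_differentiable : DifferentiableAt 𝕜 (h n j) x :=
      wz_eq ▸ (hw n x).fun_mul (hz n x).differentiableAt
    simpa only [hρ, e2] using h_differentiable.hasDerivAt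
  have flux_eq : (fun t => deriv (z n) t * w n t - (1 / 2 : 𝕜) • (w n t * z n t) ^ 2)
      = fun t => b (n + 1) (j + 1) t * h n j t - (1 / 2 : 𝕜) • h n j t ^ 2 := by
    funext t
    rw [(hz n t).deriv, ← hwz, mul_right_comm, mul_comm (z n t), mul_comm (b _ _ t)]
  have σ_sub : σ n x - σ (n + 1) x = (B1 (n + 1) (j + 1) x - B1 (n + 1) j x) * h n j x
      + (b (n + 1) (j + 1) x - h n j x) * (ρ n x - ρ (n + 1) x) := by
    rw [← hρ]
    exact boundary_nonlocality_sub_succ (ρ := (ρ · x)) (σ := (σ · x)) (toda n x)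
      (by simpa only [hρ] using e3 n x) (hσ · x)
  rw [wz_eq, flux_eq, σ_sub]
  exact ⟨hasDerivAt_h, hasDerivAt_mul_sub_half_smul_sq (e1 (n + 1) x) hasDerivAt_h⟩

end NormedAlgebra

/-- the difference derivatives of the boundary nonlocalities
`ρₙ = bₙ⁽¹⁾(0)` and `σₙ = bₙ⁽²⁾(0) + ρₙ(bₙ(1) − hₙ(1))` are total x-derivatives:
`ρₙ − ρ_{n+1} = ∂ₓ(wₙzₙ)` and `σₙ − σ_{n+1} = ∂ₓ(zₙ,ₓ wₙ − ½(wₙzₙ)²)`, where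
`wₙ = exp(−qₙ(0))`, `zₙ = exp(q_{n+1}(1))`. Here `B1, B2` play the roles of
`b⁽¹⁾, b⁽²⁾`. -/
theorem semidiscrete_boundary_nonlocalities_right
    (q h b : ℤ → ℤ → ℝ → ℝ)
    (hq : ∀ n j, Differentiable ℝ (q n j))
    (hh : ∀ n j x, h n j x = Real.exp (q (n + 1) (j + 1) x - q n j x))
    (hb : ∀ n j x, b n j x = deriv (q n j) x)
    (toda : ∀ (n : ℤ) (x : ℝ),
        b n 1 x - b (n + 1) 1 x = h n 1 x - h n 0 x)
    (B1 B2 : ℤ → ℤ → ℝ → ℝ)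
    (e1 : ∀ (n j : ℤ) (x : ℝ), HasDerivAt (b n j) (B1 n j x - B1 n (j - 1) x) x)
    (e2 : ∀ (n j : ℤ) (x : ℝ), B1 n j x - B1 (n + 1) j x = deriv (h n j) x)
    (e3 : ∀ (n j : ℤ) (x : ℝ),
        B2 n j x - B2 (n + 1) j x
          = h n j x * B1 (n + 1) (j + 1) x - h (n + 1) (j + 1) x * B1 (n + 1) j x)
    (w z ρ σ : ℤ → ℝ → ℝ)
    (hw : ∀ n x, w n x = Real.exp (-(q n 0 x)))
    (hz : ∀ n x, z n x = Real.exp (q (n + 1) 1 x))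
    (hρ : ∀ n x, ρ n x = B1 n 0 x)
    (hσ : ∀ n x, σ n x = B2 n 0 x + ρ n x * (b n 1 x - h n 1 x)) :
    ∀ (n : ℤ) (x : ℝ),
      (ρ n x - ρ (n + 1) x = deriv (fun t => w n t * z n t) x)
      ∧ (σ n x - σ (n + 1) x
          = deriv (fun t => deriv (z n) t * w n t - (1 / 2) * (w n t * z n t) ^ 2) x) := by
  have w_differentiable (n : ℤ) : Differentiable ℝ (w n) := funext (hw n) ▸ (hq n 0).neg.exp
  have hasDerivAt_z (n : ℤ) (x : ℝ) : HasDerivAt (z n) (z n x * b (n + 1) 1 x) x := by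
    simpa only [← hz, ← hb] using (hq (n + 1) 1 x).hasDerivAt.exp
  have wz_eq (n : ℤ) (x : ℝ) : w n x * z n x = h n 0 x := by
    rw [hw, hz, hh, ← Real.exp_add, neg_add_eq_sub, zero_add]
  exact fun n x => (semidiscrete_boundary_nonlocalities_right_general 0 w_differentiable
    hasDerivAt_z wz_eq toda (e1 · 1) (e2 · 0) (e3 · 0) hρ hσ n x).imp
      (·.deriv.symm) (·.deriv.symm)
end
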